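/- Let I ⊆ ℝ be open and let τ : I → ℝ be a smooth function such that for all s ∈ I: (s,τ(s)) ∈ Ω, δ(s,τ(s)) = 0, and x_t(s,τ(s)) ≠ 0, and let α : I → ℝ be smooth with x_s(s,τ(s)) + α(s)·x_t(s,τ(s)) = 0 for all s ∈ I, and set γ(s) = x(s,τ(s)). Fix s ∈ I with δ_t(s,τ(s)) ≠ 0. If α(s) = τ'(s) but α'(s) ≠ τ''(s), then γ'(s) = 0 and [γ''(s), γ'''(s)] ≠ 0; that is, γ has an ordinary cusp at x(s,τ(s)). -/

import Mathlib

noncomputable section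

/-- `det2 u v` is the determinant of the 2×2 matrix with columns `u` and `v`. -/
def det2 (u v : ℝ × ℝ) : ℝ := u.1 * v.2 - u.2 * v.1

/-- Partial derivative with respect to the first coordinate `s`. -/
def pds (f : ℝ × ℝ → ℝ) (p : ℝ × ℝ) : ℝ := fderiv ℝ f p (1, 0)

/-- Partial derivative with respect to the second coordinate `t`. -/
def pdt (f : ℝ × ℝ → ℝ) (p : ℝ × ℝ) : ℝ := fderiv ℝ f p (0, 1)

/-- The planar map `x = (A, B)`. -/
def xmap (A B : ℝ × ℝ → ℝ) (p : ℝ × ℝ) : ℝ × ℝ := (A p, B p)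

/-- The conjugate map `c = (-D, C)`. -/
def cmap (C D : ℝ × ℝ → ℝ) (p : ℝ × ℝ) : ℝ × ℝ := (-D p, C p)

/-- `x_s = (A_s, B_s)`. -/
def xs (A B : ℝ × ℝ → ℝ) (p : ℝ × ℝ) : ℝ × ℝ := (pds A p, pds B p)

/-- `x_t = (A_t, B_t)`. -/
def xt (A B : ℝ × ℝ → ℝ) (p : ℝ × ℝ) : ℝ × ℝ := (pdt A p, pdt B p)

/-- `δ = A_s B_t - A_t B_s = [x_s, x_t]`. -/
def deltaMap (A B : ℝ × ℝ → ℝ) (p : ℝ × ℝ) : ℝ :=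
  pds A p * pdt B p - pdt A p * pds B p

/-!
Since `x_s + α x_t = 0` along the graph of `τ`, the image curve satisfies `γ' = (τ' - α) x_t`. At a
simple zero of `β = τ' - α` this gives `γ'' = β' x_t` and `γ''' = β'' x_t + 2 β' (x_t)'`, where
`(x_t)'` is the derivative of `x_t` along the graph, so the cusp is ordinary as soon as `x_t` and
`(x_t)'` are linearly independent. They are, because differentiating `δ = [x_s, x_t]` in `t`,
substituting `x_s = -α x_t` and using `x_st = x_ts`, one finds `δ_t = -[x_t, x_ts + α x_tt]`, and
`x_ts + α x_tt` is `(x_t)'` where `τ' = α`.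
-/

open scoped Topology

section SimpleZero

variable {𝕜 F : Type*} [NontriviallyNormedField 𝕜] [NormedAddCommGroup F] [NormedSpace 𝕜 F]

theorem hasDerivAt_smul_of_eq_zero {c : 𝕜 → 𝕜} {c' x : 𝕜} {f : 𝕜 → F}
    (hc : HasDerivAt c c' x) (hcx : c x = 0) (hf : ContinuousAt f x) :
    HasDerivAt (fun y => c y • f y) (c' • f x) x := by
  rw [hasDerivAt_iff_tendsto_slope] at hc ⊢
  refine (hc.smul (hf.mono_left nhdsWithin_le_nhds)).congr fun y => ?_
  simp only [slope_def_module, hcx, zero_smul, sub_zero, smul_eq_mul, mul_smul]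

variable {γ v : 𝕜 → F} {β : 𝕜 → 𝕜} {s : 𝕜}

theorem deriv_deriv_of_eventuallyEq_smul (hγ : deriv γ =ᶠ[𝓝 s] fun u => β u • v u)
    (hβs : β s = 0) (hβ : DifferentiableAt 𝕜 β s) (hv : ContinuousAt v s) :
    deriv (deriv γ) s = deriv β s • v s :=
  hγ.deriv_eq.trans (hasDerivAt_smul_of_eq_zero hβ.hasDerivAt hβs hv).deriv

theorem deriv_deriv_deriv_of_eventuallyEq_smul (hγ : deriv γ =ᶠ[𝓝 s] fun u => β u • v u)
    (hβs : β s = 0) (hβ : ContDiffAt 𝕜 2 β s) (hv : ContDiffAt 𝕜 1 v s) :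
    deriv (deriv (deriv γ)) s = deriv (deriv β) s • v s + (2 * deriv β s) • deriv v s := by
  have hγ' : deriv (deriv γ) =ᶠ[𝓝 s] fun u => β u • deriv v u + deriv β u • v u := by
    filter_upwards [hγ.eventuallyEq_nhds, hβ.eventually (by simp), hv.eventually (by simp)]
      with u hγu hβu hvu
    exact hγu.deriv_eq.trans
      ((hβu.differentiableAt two_ne_zero).hasDerivAt.smul
        (hvu.differentiableAt one_ne_zero).hasDerivAt).deriv
  have hβ' : ContDiffAt 𝕜 1 (deriv β) s := hβ.derivWithin (by norm_num)
  have hv' : ContinuousAt (deriv v) s := (hv.derivWithin (m := 0) (by norm_num)).continuousAt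
  have hβv' : HasDerivAt (fun u => β u • deriv v u) (deriv β s • deriv v s) s :=
    hasDerivAt_smul_of_eq_zero (hβ.differentiableAt two_ne_zero).hasDerivAt hβs hv'
  have hβ'v : HasDerivAt (fun u => deriv β u • v u)
      (deriv β s • deriv v s + deriv (deriv β) s • v s) s :=
    (hβ'.differentiableAt one_ne_zero).hasDerivAt.smul
      (hv.differentiableAt one_ne_zero).hasDerivAt
  rw [hγ'.deriv_eq, (hβv'.fun_add hβ'v).deriv]
  module

end SimpleZero

section OrdinaryCusp

variable {F : Type*} [NormedAddCommGroup F] [NormedSpace ℝ F]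

/-- The curve `γ` has an ordinary cusp at the parameter `s`. The definition makes sense in any real
normed space; in the plane the linear independence reads `det2 (γ'' s) (γ''' s) ≠ 0`. It forces
both derivatives to be nonzero, so neither of them is the junk value `0` of `deriv`. -/
def HasOrdinaryCuspAt (γ : ℝ → F) (s : ℝ) : Prop :=
  HasDerivAt γ 0 s ∧ LinearIndependent ℝ ![deriv (deriv γ) s, deriv (deriv (deriv γ)) s]

theorem hasOrdinaryCuspAt_of_eventually_hasDerivAt_smul {γ v : ℝ → F} {β : ℝ → ℝ} {s : ℝ}
    (hγ : ∀ᶠ u in 𝓝 s, HasDerivAt γ (β u • v u) u) (hβ : ContDiffAt ℝ 2 β s)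
    (hv : ContDiffAt ℝ 1 v s) (hβs : β s = 0) (hβ's : deriv β s ≠ 0)
    (hvv' : LinearIndependent ℝ ![v s, deriv v s]) :
    HasOrdinaryCuspAt γ s := by
  have hγs : HasDerivAt γ 0 s := by simpa [hβs] using hγ.self_of_nhds
  have hγ' : deriv γ =ᶠ[𝓝 s] fun u => β u • v u := hγ.mono fun _ hu => hu.deriv
  have hγ'' : deriv (deriv γ) s = deriv β s • v s + (0 : ℝ) • deriv v s := by
    rw [zero_smul, add_zero, deriv_deriv_of_eventuallyEq_smul hγ' hβs
      (hβ.differentiableAt two_ne_zero) hv.continuousAt]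
  refine ⟨hγs, ?_⟩
  rw [hγ'', deriv_deriv_deriv_of_eventuallyEq_smul hγ' hβs hβ hv,
    LinearIndependent.pair_add_smul_add_smul_iff]
  exact ⟨hvv', by simp [hβ's]⟩

end OrdinaryCusp

theorem linearIndependent_pair_iff_det2_ne_zero {u v : ℝ × ℝ} :
    LinearIndependent ℝ ![u, v] ↔ det2 u v ≠ 0 := by
  have hbasis : LinearIndependent ℝ ![((1, 0) : ℝ × ℝ), (0, 1)] := by
    simp [LinearIndependent.pair_iff]
  have hcoord (w : ℝ × ℝ) : w = w.1 • (1, 0) + w.2 • (0, 1) := by simp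
  rw [hcoord u, hcoord v, LinearIndependent.pair_add_smul_add_smul_iff]
  simp [hbasis, det2, sub_ne_zero]

section PartialDerivatives

theorem fderiv_fderiv_apply_comm {𝕜 E F : Type*} [RCLike 𝕜] [NormedAddCommGroup E]
    [NormedSpace 𝕜 E] [NormedAddCommGroup F] [NormedSpace 𝕜 F] {f : E → F} {p : E}
    (hf : ContDiffAt 𝕜 2 f p) (v w : E) :
    fderiv 𝕜 (fun q => fderiv 𝕜 f q v) p w = fderiv 𝕜 (fun q => fderiv 𝕜 f q w) p v := by
  have hf' : DifferentiableAt 𝕜 (fderiv 𝕜 f) p :=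
    (hf.fderiv_right (m := 1) (by norm_num)).differentiableAt one_ne_zero
  have hsnd (v w : E) : fderiv 𝕜 (fun q => fderiv 𝕜 f q v) p w = fderiv 𝕜 (fderiv 𝕜 f) p w v := by
    simp [fderiv_clm_apply hf' (differentiableAt_const v)]
  rw [hsnd, hsnd, (hf.isSymmSndFDerivAt (by simp)).eq]

theorem hasDerivAt_comp_graph {𝕜 F : Type*} [NontriviallyNormedField 𝕜] [NormedAddCommGroup F]
    [NormedSpace 𝕜 F] {f : 𝕜 × 𝕜 → F} {τ : 𝕜 → 𝕜} {s : 𝕜}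
    (hf : DifferentiableAt 𝕜 f (s, τ s)) (hτ : DifferentiableAt 𝕜 τ s) :
    HasDerivAt (fun u => f (u, τ u))
      (fderiv 𝕜 f (s, τ s) (1, 0) + deriv τ s • fderiv 𝕜 f (s, τ s) (0, 1)) s := by
  have hgraph : HasDerivAt (fun u => (u, τ u)) ((1, 0) + deriv τ s • (0, 1)) s := by
    simpa using (hasDerivAt_id s).prodMk hτ.hasDerivAt
  rw [← map_smul, ← map_add]
  exact HasFDerivAt.comp_hasDerivAt (f := fun u => (u, τ u)) s hf.hasFDerivAt hgraph

variable {A B : ℝ × ℝ → ℝ} {p : ℝ × ℝ} {τ : ℝ → ℝ} {s : ℝ}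

theorem contDiffAt_pds {m n : WithTop ℕ∞} (hA : ContDiffAt ℝ n A p) (hmn : m + 1 ≤ n) :
    ContDiffAt ℝ m (pds A) p :=
  (hA.fderiv_right hmn).clm_apply contDiffAt_const

theorem contDiffAt_pdt {m n : WithTop ℕ∞} (hA : ContDiffAt ℝ n A p) (hmn : m + 1 ≤ n) :
    ContDiffAt ℝ m (pdt A) p :=
  (hA.fderiv_right hmn).clm_apply contDiffAt_const

theorem xt_pds_eq_xs_pdt (hA : ContDiffAt ℝ 2 A p) (hB : ContDiffAt ℝ 2 B p) :
    xt (pds A) (pds B) p = xs (pdt A) (pdt B) p :=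
  Prod.ext (fderiv_fderiv_apply_comm hA _ _) (fderiv_fderiv_apply_comm hB _ _)

theorem hasDerivAt_xmap_graph (hA : DifferentiableAt ℝ A (s, τ s))
    (hB : DifferentiableAt ℝ B (s, τ s)) (hτ : DifferentiableAt ℝ τ s) :
    HasDerivAt (fun u => xmap A B (u, τ u))
      (xs A B (s, τ s) + deriv τ s • xt A B (s, τ s)) s :=
  (hasDerivAt_comp_graph hA hτ).prodMk (hasDerivAt_comp_graph hB hτ)

theorem pdt_deltaMap (hA : ContDiffAt ℝ 2 A p) (hB : ContDiffAt ℝ 2 B p) :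
    pdt (deltaMap A B) p =
      det2 (xs (pdt A) (pdt B) p) (xt A B p) + det2 (xs A B p) (xt (pdt A) (pdt B) p) := by
  have hAs := ((contDiffAt_pds hA one_add_one_eq_two.le).differentiableAt one_ne_zero).hasFDerivAt
  have hAt := ((contDiffAt_pdt hA one_add_one_eq_two.le).differentiableAt one_ne_zero).hasFDerivAt
  have hBs := ((contDiffAt_pds hB one_add_one_eq_two.le).differentiableAt one_ne_zero).hasFDerivAt
  have hBt := ((contDiffAt_pdt hB one_add_one_eq_two.le).differentiableAt one_ne_zero).hasFDerivAt
  have hδ : HasFDerivAt (deltaMap A B) _ p := (hAs.mul hBt).sub (hAt.mul hBs)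
  rw [← xt_pds_eq_xs_pdt hA hB, pdt, hδ.fderiv]
  simp only [det2, xs, xt, pdt, sub_apply, add_apply, smul_apply, smul_eq_mul]
  ring

theorem pdt_deltaMap_of_xs_add_smul_xt_eq_zero {a : ℝ} (hA : ContDiffAt ℝ 2 A p)
    (hB : ContDiffAt ℝ 2 B p) (hker : xs A B p + a • xt A B p = 0) :
    pdt (deltaMap A B) p =
      -det2 (xt A B p) (xs (pdt A) (pdt B) p + a • xt (pdt A) (pdt B) p) := by
  rw [pdt_deltaMap hA hB, eq_neg_of_add_eq_zero_left hker]
  simp only [det2, Prod.fst_add, Prod.snd_add, Prod.fst_neg, Prod.snd_neg, Prod.smul_fst,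
    Prod.smul_snd, smul_eq_mul]
  ring

end PartialDerivatives

section SingularCurve

variable {A B : ℝ × ℝ → ℝ} {τ α : ℝ → ℝ} {s : ℝ}

theorem eventually_hasDerivAt_xmap_graph (hA : ContDiffAt ℝ 1 A (s, τ s))
    (hB : ContDiffAt ℝ 1 B (s, τ s)) (hτ : ContDiffAt ℝ 1 τ s)
    (hker : ∀ᶠ u in 𝓝 s, xs A B (u, τ u) + α u • xt A B (u, τ u) = 0) :
    ∀ᶠ u in 𝓝 s, HasDerivAt (fun u => xmap A B (u, τ u))
      ((deriv τ u - α u) • xt A B (u, τ u)) u := by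
  have hgraph : ContinuousAt (fun u => (u, τ u)) s := continuousAt_id.prodMk hτ.continuousAt
  filter_upwards [hgraph.eventually (hA.eventually (by simp)),
    hgraph.eventually (hB.eventually (by simp)), hτ.eventually (by simp), hker]
    with u hAu hBu hτu hkeru
  convert hasDerivAt_xmap_graph (hAu.differentiableAt one_ne_zero)
    (hBu.differentiableAt one_ne_zero) (hτu.differentiableAt one_ne_zero) using 1
  rw [eq_neg_of_add_eq_zero_left hkeru]
  module

theorem linearIndependent_xt_deriv_xt_graph (hA : ContDiffAt ℝ 2 A (s, τ s))
    (hB : ContDiffAt ℝ 2 B (s, τ s)) (hτ : DifferentiableAt ℝ τ s)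
    (hker : xs A B (s, τ s) + deriv τ s • xt A B (s, τ s) = 0)
    (hδt : pdt (deltaMap A B) (s, τ s) ≠ 0) :
    LinearIndependent ℝ ![xt A B (s, τ s), deriv (fun u => xt A B (u, τ u)) s] := by
  have hxt' : HasDerivAt (fun u => xt A B (u, τ u))
      (xs (pdt A) (pdt B) (s, τ s) + deriv τ s • xt (pdt A) (pdt B) (s, τ s)) s :=
    hasDerivAt_xmap_graph ((contDiffAt_pdt hA one_add_one_eq_two.le).differentiableAt one_ne_zero)
      ((contDiffAt_pdt hB one_add_one_eq_two.le).differentiableAt one_ne_zero) hτ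
  rwa [linearIndependent_pair_iff_det2_ne_zero, hxt'.deriv, ← neg_ne_zero,
    ← pdt_deltaMap_of_xs_add_smul_xt_eq_zero hA hB hker]

theorem image_of_singular_set_ordinary_cusp_general
    (hA : ContDiffAt ℝ 2 A (s, τ s)) (hB : ContDiffAt ℝ 2 B (s, τ s))
    (hτ : ContDiffAt ℝ 3 τ s) (hα : ContDiffAt ℝ 2 α s)
    (hker : ∀ᶠ u in 𝓝 s, xs A B (u, τ u) + α u • xt A B (u, τ u) = 0)
    (hδt : pdt (deltaMap A B) (s, τ s) ≠ 0)
    (hατ : α s = deriv τ s) (hατ' : deriv α s ≠ deriv (deriv τ) s) :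
    HasOrdinaryCuspAt (fun u => xmap A B (u, τ u)) s := by
  have hτ₁ : ContDiffAt ℝ 1 τ s := hτ.of_le (by norm_num)
  have hτ' : ContDiffAt ℝ 2 (deriv τ) s := hτ.derivWithin (by norm_num)
  have hγ := eventually_hasDerivAt_xmap_graph (hA.of_le one_le_two) (hB.of_le one_le_two) hτ₁ hker
  have hxt : ContDiffAt ℝ 1 (fun u => xt A B (u, τ u)) s :=
    ContDiffAt.comp (g := xt A B) (f := fun u => (u, τ u)) s
      ((contDiffAt_pdt hA one_add_one_eq_two.le).prodMk (contDiffAt_pdt hB one_add_one_eq_two.le))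
      (contDiffAt_id.prodMk hτ₁)
  have hβ's : deriv (fun u => deriv τ u - α u) s ≠ 0 := by
    rw [deriv_fun_sub (hτ'.differentiableAt two_ne_zero) (hα.differentiableAt two_ne_zero)]
    exact sub_ne_zero.mpr hατ'.symm
  have hindep := linearIndependent_xt_deriv_xt_graph hA hB (hτ₁.differentiableAt one_ne_zero)
    (hατ ▸ hker.self_of_nhds) hδt
  exact hasOrdinaryCuspAt_of_eventually_hasDerivAt_smul hγ (hτ'.sub hα) hxt
    (sub_eq_zero.mpr hατ.symm) hβ's hindep

end SingularCurve

theorem image_of_singular_set_ordinary_cusp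
    (Ω : Set (ℝ × ℝ)) (hΩ : IsOpen Ω)
    (A B C D : ℝ × ℝ → ℝ)
    (hA : ContDiffOn ℝ (⊤ : ℕ∞) A Ω) (hB : ContDiffOn ℝ (⊤ : ℕ∞) B Ω)
    (hC : ContDiffOn ℝ (⊤ : ℕ∞) C Ω) (hD : ContDiffOn ℝ (⊤ : ℕ∞) D Ω)
    (hCR1 : ∀ p ∈ Ω, pds A p = - pdt D p)
    (hCR2 : ∀ p ∈ Ω, pdt A p = pds D p)
    (hCR3 : ∀ p ∈ Ω, pds B p = pdt C p)
    (hCR4 : ∀ p ∈ Ω, pdt B p = - pds C p)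
    (I : Set ℝ) (hI : IsOpen I) (τ : ℝ → ℝ) (hτ : ContDiffOn ℝ (⊤ : ℕ∞) τ I)
    (hmem : ∀ s ∈ I, (s, τ s) ∈ Ω)
    (hδ : ∀ s ∈ I, deltaMap A B (s, τ s) = 0)
    (hxt : ∀ s ∈ I, xt A B (s, τ s) ≠ 0)
    (α : ℝ → ℝ) (hαsm : ContDiffOn ℝ (⊤ : ℕ∞) α I)
    (hα : ∀ s ∈ I, xs A B (s, τ s) + α s • xt A B (s, τ s) = 0)
    (s : ℝ) (hs : s ∈ I)
    (hδt : pdt (deltaMap A B) (s, τ s) ≠ 0)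
    (h1 : α s = deriv τ s)
    (h2 : deriv α s ≠ deriv (deriv τ) s)
    :
    deriv (fun s' => xmap A B (s', τ s')) s = 0 ∧
    det2 (deriv (deriv (fun s' => xmap A B (s', τ s'))) s)
        (deriv (deriv (deriv (fun s' => xmap A B (s', τ s')))) s) ≠ 0 := by
  have smooth_at {f : ℝ × ℝ → ℝ} (hf : ContDiffOn ℝ (⊤ : ℕ∞) f Ω) : ContDiffAt ℝ 2 f (s, τ s) :=
    (hf.contDiffAt (hΩ.mem_nhds (hmem s hs))).of_le ENat.LEInfty.out
  have cusp := image_of_singular_set_ordinary_cusp_general (smooth_at hA) (smooth_at hB)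
    ((hτ.contDiffAt (hI.mem_nhds hs)).of_le ENat.LEInfty.out)
    ((hαsm.contDiffAt (hI.mem_nhds hs)).of_le ENat.LEInfty.out)
    (Filter.eventually_of_mem (hI.mem_nhds hs) hα) hδt h1 h2
  exact ⟨cusp.1.deriv, linearIndependent_pair_iff_det2_ne_zero.mp cusp.2⟩
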